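/- Let C be a unital C*-algebra, let z be a positive invertible element of the center of C, and let e_1, …, e_N be projections in C satisfying the Jones relations e_k e_{k+1} e_k = z^{-1} e_k, e_{k+1} e_k e_{k+1} = z^{-1} e_{k+1}, and e_k e_l = e_l e_k for |k − l| > 1 (all indices in {1, …, N}). Fix k ≥ 0, and let v_1, …, v_r ∈ C be elements commuting with e_l for every l ≥ k + 2 (in range) and satisfying Σ_{j=1}^r v_j e_{k+1} v_j^* = 1. Then for every n ≥ 1 with 2n + k − 1 ≤ N: Σ_{j=1}^r v_j g_n^{(k)} v_j^* = z^{−(n−1)} g_{n−1}^{(k+1)}. -/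

import Mathlib

/-- The descending product `e a * e (a - 1) * ⋯ * e b` (equal to `1` when `b > a`). -/
def dProd {C : Type*} [Monoid C] (e : ℕ → C) (a b : ℕ) : C :=
  ((List.range (a + 1 - b)).map fun i => e (a - i)).prod

/-- The ascending product `e a * e (a + 1) * ⋯ * e b` (equal to `1` when `a > b`). -/
def aProd {C : Type*} [Monoid C] (e : ℕ → C) (a b : ℕ) : C :=
  ((List.range (b + 1 - a)).map fun i => e (a + i)).prod

/-- `gElt e n j` is the element
`g_n^{(j)} = (e_{n+j} e_{n+j-1} ⋯ e_{j+1}) (e_{n+j+1} e_{n+j} ⋯ e_{j+2}) ⋯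
(e_{2n+j-1} e_{2n+j-2} ⋯ e_{n+j})`, a product of `n` blocks whose `i`-th block
(`1 ≤ i ≤ n`) is the descending product `e_{n+j+i-1} e_{n+j+i-2} ⋯ e_{j+i}`;
and `g_0^{(j)} = 1`. -/
def gElt {C : Type*} [Monoid C] (e : ℕ → C) (n j : ℕ) : C :=
  ((List.range n).map fun i => dProd e (n + j + i) (j + i + 1)).prod

theorem dProd_split {C : Type*} [Monoid C] (e : ℕ → C) (p q c : ℕ) (hq : q ≤ p) (hc : c ≤ q + 1) :
    dProd e p c = dProd e p (q + 1) * dProd e q c := by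
  unfold dProd
  have h : p + 1 - c = (p + 1 - (q + 1)) + (q + 1 - c) := by omega
  rw [h, List.range_add, List.map_append, List.prod_append, List.map_map]
  congr 2
  apply List.map_congr_left
  intro i hi
  simp only [Function.comp]
  congr 1
  omega

theorem dProd_self {C : Type*} [Monoid C] (e : ℕ → C) (p : ℕ) : dProd e p p = e p := by
  simp [dProd]

theorem dProd_empty {C : Type*} [Monoid C] (e : ℕ → C) (p c : ℕ) (h : p < c) :
    dProd e p c = 1 := by
  have : p + 1 - c = 0 := by omega
  simp [dProd, this]

theorem dProd_last {C : Type*} [Monoid C] (e : ℕ → C) (p c : ℕ) (h : c ≤ p) :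
    dProd e p c = dProd e p (c + 1) * e c := by
  rw [dProd_split e p c c h (by omega), dProd_self]

theorem dProd_comm {C : Type*} [Monoid C] (e : ℕ → C) (p c : ℕ) (x : C)
    (h : ∀ l, c ≤ l → l ≤ p → Commute x (e l)) : Commute x (dProd e p c) := by
  unfold dProd
  apply Commute.list_prod_right
  intro y hy
  simp only [List.mem_map, List.mem_range] at hy
  obtain ⟨i, hi, rfl⟩ := hy
  exact h _ (by omega) (by omega)

theorem dProd_step {C : Type*} [Monoid C] (N : ℕ) (w : C) (hw : ∀ c : C, Commute w c) (e : ℕ → C)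
    (h1 : ∀ k, 1 ≤ k → k + 1 ≤ N → e k * e (k + 1) * e k = w * e k)
    (h3 : ∀ k l, 1 ≤ k → k ≤ N → 1 ≤ l → l ≤ N → (k + 1 < l ∨ l + 1 < k) →
      e k * e l = e l * e k)
    (p q c : ℕ) (hc : 1 ≤ c) (hcq : c ≤ q + 1) (hq : q + 1 ≤ p) (hp : p + 1 ≤ N) :
    dProd e p (q + 1) * dProd e (p + 1) c = w * (dProd e p c * dProd e (p + 1) (q + 3)) := by
  have c1 : Commute (e (q + 1)) (dProd e (p + 1) (q + 3)) :=
    dProd_comm _ _ _ _ fun l hl hl' =>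
      h3 _ _ (by omega) (by omega) (by omega) (by omega) (by omega)
  have c2 : Commute (dProd e q c) (dProd e (p + 1) (q + 3)) :=
    dProd_comm _ _ _ _ fun l hl hl' => Commute.symm <|
      dProd_comm _ _ _ _ fun m hm hm' =>
        h3 _ _ (by omega) (by omega) (by omega) (by omega) (by omega)
  rw [dProd_split e (p + 1) q c (by omega) hcq, dProd_split e p q c (by omega) hcq,
    dProd_last e p (q + 1) hq, dProd_last e (p + 1) (q + 1) (by omega),
    dProd_last e (p + 1) (q + 2) (by omega)]
  have h := h1 (q + 1) (by omega) (by omega)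
  generalize dProd e (p + 1) (q + 3) = X at *
  generalize dProd e p (q + 1 + 1) = A at *
  generalize dProd e q c = B at *
  calc A * e (q + 1) * (X * e (q + 2) * e (q + 1) * B)
      = A * (e (q + 1) * X) * e (q + 2) * e (q + 1) * B := by simp only [mul_assoc]
    _ = A * X * (e (q + 1) * e (q + 2) * e (q + 1)) * B := by
        rw [c1.eq]; simp only [mul_assoc]
    _ = A * X * w * e (q + 1) * B := by rw [h]; simp only [mul_assoc]
    _ = w * (A * (X * e (q + 1)) * B) := by
        rw [← (hw (A * X)).eq]; simp only [mul_assoc]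
    _ = w * (A * e (q + 1) * (X * B)) := by rw [← c1.eq]; simp only [mul_assoc]
    _ = _ := by rw [← c2.eq]; simp only [mul_assoc]

theorem dProd_telescope {C : Type*} [Monoid C] (N : ℕ) (w : C) (hw : ∀ c : C, Commute w c)
    (e : ℕ → C)
    (h1 : ∀ k, 1 ≤ k → k + 1 ≤ N → e k * e (k + 1) * e k = w * e k)
    (h3 : ∀ k l, 1 ≤ k → k ≤ N → 1 ≤ l → l ≤ N → (k + 1 < l ∨ l + 1 < k) →
      e k * e l = e l * e k)
    (m b t : ℕ) (ht : b + t ≤ m) (hN : m + t ≤ N) :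
    dProd e m (b + 1) * ((List.range t).map fun i => dProd e (m + 1 + i) (b + 1 + i)).prod
      = w ^ t * (((List.range t).map fun i => dProd e (m + i) (b + 1 + i)).prod
        * dProd e (m + t) (b + 1 + 2 * t)) := by
  induction t with
  | zero => simp
  | succ t ih =>
    have ih := ih (by omega) (by omega)
    rw [List.range_succ, List.map_append, List.prod_append, ← mul_assoc, ih]
    have hs := dProd_step N w hw e h1 h3 (m + t) (b + 2 * t) (b + 1 + t)
      (by omega) (by omega) (by omega) (by omega)
    simp only [List.map_append, List.prod_append, List.map_cons, List.map_nil, List.prod_cons,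
      List.prod_nil, mul_one]
    rw [show b + 1 + 2 * t = b + 2 * t + 1 by ring, show m + 1 + t = m + t + 1 by ring,
      show b + 1 + 2 * (t + 1) = b + 2 * t + 3 by ring, ← add_assoc m t 1]
    rw [mul_assoc, mul_assoc, hs, pow_succ, mul_assoc, ← mul_assoc _ w, ← (hw _).eq]
    simp only [mul_assoc]

/-- In a unital C*-algebra with a positive invertible central element `z` and projections
`e₁, …, e_N` satisfying the Jones relations, if `v₁, …, v_r` commute with `e_l` for all
`l ≥ k + 2` and satisfy `∑ⱼ vⱼ e_{k+1} vⱼ* = 1`, then for `n ≥ 1` with `2n + k - 1 ≤ N`,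
`∑ⱼ vⱼ g_n^{(k)} vⱼ* = z^{-(n-1)} g_{n-1}^{(k+1)}`. -/
theorem jones_g_quasiBasis_sum
    {C : Type*} [CStarAlgebra C] [PartialOrder C] [StarOrderedRing C]
    (N : ℕ) (z : C) [Invertible z] (hzpos : 0 ≤ z) (hzc : ∀ c : C, z * c = c * z)
    (e : ℕ → C)
    (hproj : ∀ k, 1 ≤ k → k ≤ N → star (e k) = e k ∧ e k * e k = e k)
    (h1 : ∀ k, 1 ≤ k → k + 1 ≤ N → e k * e (k + 1) * e k = ⅟z * e k)
    (h2 : ∀ k, 1 ≤ k → k + 1 ≤ N → e (k + 1) * e k * e (k + 1) = ⅟z * e (k + 1))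
    (h3 : ∀ k l, 1 ≤ k → k ≤ N → 1 ≤ l → l ≤ N → (k + 1 < l ∨ l + 1 < k) →
      e k * e l = e l * e k)
    (k r : ℕ) (v : Fin r → C)
    (hvcomm : ∀ (j : Fin r) (l : ℕ), k + 2 ≤ l → l ≤ N → v j * e l = e l * v j)
    (hvsum : ∑ j, v j * e (k + 1) * star (v j) = 1)
    (n : ℕ) (hn : 1 ≤ n) (hrange : 2 * n + k - 1 ≤ N) :
    ∑ j, v j * gElt e n k * star (v j) = (⅟z) ^ (n - 1) * gElt e (n - 1) (k + 1) := by
  obtain ⟨s, rfl⟩ : ∃ s, n = s + 1 := ⟨n - 1, by omega⟩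
  have hw : ∀ c : C, Commute (⅟z) c := fun c => Commute.invOf_left (hzc c)
  have hg : gElt e (s + 1) k = dProd e (s + 1 + k) (k + 1 + 1) * e (k + 1) *
      ((List.range s).map fun i => dProd e (s + 1 + k + 1 + i) (k + 1 + 1 + i)).prod := by
    unfold gElt
    rw [List.range_succ_eq_map, List.map_cons, List.prod_cons, List.map_map]
    congr 1
    · exact dProd_last e _ _ (by omega)
    · congr 1
      apply List.map_congr_left
      intro i _
      simp only [Function.comp]
      congr 1 <;> omega
  have hT := dProd_telescope N (⅟z) hw e h1 h3 (s + 1 + k) (k + 1) s (by omega) (by omega)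
  rw [dProd_empty e (s + 1 + k + s) _ (by omega), mul_one] at hT
  have hg' : gElt e (s + 1 - 1) (k + 1) =
      ((List.range s).map fun i => dProd e (s + 1 + k + i) (k + 1 + 1 + i)).prod := by
    unfold gElt
    rw [Nat.add_sub_cancel]
    congr 1
    apply List.map_congr_left
    intro i _
    congr 1 <;> omega
  rw [hg', Nat.add_sub_cancel, ← hT, hg]
  have cA : ∀ j, Commute (v j) (dProd e (s + 1 + k) (k + 1 + 1)) := fun j =>
    dProd_comm _ _ _ _ fun l hl hl' => hvcomm j l (by omega) (by omega)
  have cB : ∀ j, Commute (star (v j))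
      ((List.range s).map fun i => dProd e (s + 1 + k + 1 + i) (k + 1 + 1 + i)).prod := by
    intro j
    apply Commute.list_prod_right
    intro y hy
    simp only [List.mem_map, List.mem_range] at hy
    obtain ⟨i, hi, rfl⟩ := hy
    refine dProd_comm _ _ _ _ fun l hl hl' => ?_
    have h := congrArg star (hvcomm j l (by omega) (by omega))
    rw [star_mul, star_mul, (hproj l (by omega) (by omega)).1] at h
    exact h.symm
  generalize dProd e (s + 1 + k) (k + 1 + 1) = A at *
  generalize ((List.range s).map fun i => dProd e (s + 1 + k + 1 + i) (k + 1 + 1 + i)).prod = B at *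
  calc ∑ j, v j * (A * e (k + 1) * B) * star (v j)
      = ∑ j, A * (v j * e (k + 1) * star (v j)) * B := by
        refine Finset.sum_congr rfl fun j _ => ?_
        calc v j * (A * e (k + 1) * B) * star (v j)
            = (v j * A) * e (k + 1) * (B * star (v j)) := by simp only [mul_assoc]
          _ = _ := by rw [(cA j).eq, ← (cB j).eq]; simp only [mul_assoc]
    _ = A * B := by rw [← Finset.sum_mul, ← Finset.mul_sum, hvsum, mul_one]
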